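/- arXiv:2003.04703 — 2 statements merged into one kernel-verified Lean document; each statement's English description precedes it below -/
import Mathlib

section
/- For n×n matrices A, B over the extended reals ℝ̄ and a vector x ∈ ℝ̄^n, the system of inequalities A ⊗ x ≤ x and B ⊗ x ≤ x holds if and only if x = (A ⊕ B)* ⊗ x. -/
noncomputable section

/-- Max-plus matrix product over the extended reals (`-∞` is absorbing for `+` in `EReal`). -/
def mpMul {m n p : ℕ} (A : Matrix (Fin m) (Fin n) EReal) (B : Matrix (Fin n) (Fin p) EReal) :
    Matrix (Fin m) (Fin p) EReal :=
  fun i j => ⨆ k, A i k + B k j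

/-- Max-plus matrix-vector product. -/
def mpMulVec {m n : ℕ} (A : Matrix (Fin m) (Fin n) EReal) (x : Fin n → EReal) :
    Fin m → EReal :=
  fun i => ⨆ k, A i k + x k

/-- Min-plus addition on `EReal`: `+∞` is absorbing. -/
def mnAdd (a b : EReal) : EReal := -((-a) + (-b))

/-- Min-plus matrix product. -/
def mnMul {m n p : ℕ} (A : Matrix (Fin m) (Fin n) EReal) (B : Matrix (Fin n) (Fin p) EReal) :
    Matrix (Fin m) (Fin p) EReal :=
  fun i j => ⨅ k, mnAdd (A i k) (B k j)

/-- Min-plus matrix-vector product. -/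
def mnMulVec {m n : ℕ} (A : Matrix (Fin m) (Fin n) EReal) (x : Fin n → EReal) :
    Fin m → EReal :=
  fun i => ⨅ k, mnAdd (A i k) (x k)

/-- Conjugate matrix: `(conj A) i j = -(A j i)`. -/
def conjM {m n : ℕ} (A : Matrix (Fin m) (Fin n) EReal) : Matrix (Fin n) (Fin m) EReal :=
  fun i j => -(A j i)

/-- Max-plus identity matrix. -/
def mpId (n : ℕ) : Matrix (Fin n) (Fin n) EReal :=
  fun i j => if i = j then 0 else ⊥

/-- Min-plus identity matrix. -/
def mnId (n : ℕ) : Matrix (Fin n) (Fin n) EReal :=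
  fun i j => if i = j then 0 else ⊤

/-- Max-plus matrix powers. -/
def mpPow {n : ℕ} (A : Matrix (Fin n) (Fin n) EReal) : ℕ → Matrix (Fin n) (Fin n) EReal
  | 0 => mpId n
  | k + 1 => mpMul A (mpPow A k)

/-- Min-plus matrix powers. -/
def mnPow {n : ℕ} (A : Matrix (Fin n) (Fin n) EReal) : ℕ → Matrix (Fin n) (Fin n) EReal
  | 0 => mnId n
  | k + 1 => mnMul A (mnPow A k)

/-- Max-plus Kleene star: entrywise supremum of all max-plus powers. -/
def mpStar {n : ℕ} (A : Matrix (Fin n) (Fin n) EReal) : Matrix (Fin n) (Fin n) EReal :=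
  fun i j => ⨆ k, mpPow A k i j

/-- Min-plus star: entrywise infimum of all min-plus powers. -/
def mnStar {n : ℕ} (A : Matrix (Fin n) (Fin n) EReal) : Matrix (Fin n) (Fin n) EReal :=
  fun i j => ⨅ k, mnPow A k i j

/-- Entrywise maximum of two matrices (`A ⊕ B`). -/
def mSup {m n : ℕ} (A B : Matrix (Fin m) (Fin n) EReal) : Matrix (Fin m) (Fin n) EReal :=
  fun i j => A i j ⊔ B i j

/-! Because `⊥` absorbs in `EReal`, addition distributes over arbitrary suprema. Hence `M ↦ M ⊗ x`
turns products into compositions and entrywise suprema into suprema, so that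
`(A ⊕ B)* ⊗ x = ⨆ k, f^[k] x` for the monotone map `f y = (A ⊕ B) ⊗ y = A ⊗ y ⊔ B ⊗ y`.
For any monotone `f` on a complete lattice, this supremum equals `x` exactly when `f x ≤ x`: in that
case the iterates decrease from `f^[0] x = x`. -/

lemma iSup_iterate_eq_self_iff_map_le {α : Type*} [CompleteLattice α] {f : α → α}
    (hf : Monotone f) {x : α} : ⨆ k, f^[k] x = x ↔ f x ≤ x := by
  constructor
  · intro hx
    calc f x ≤ ⨆ k, f^[k] x := le_iSup (fun k => f^[k] x) 1
      _ = x := hx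
  · intro hx
    have iterates_antitone : Antitone fun k => f^[k] x := hf.antitone_iterate_of_map_le hx
    exact le_antisymm (iSup_le fun k => iterates_antitone k.zero_le)
      (le_iSup (fun k => f^[k] x) 0)

lemma ereal_sSup_add (s : Set EReal) (b : EReal) : sSup s + b = ⨆ a ∈ s, a + b := by
  refine le_antisymm ?_ (iSup₂_le fun a ha => add_le_add_left (le_sSup ha) b)
  set c := ⨆ a ∈ s, a + b
  have add_le (a : EReal) (ha : a ∈ s) : a + b ≤ c := le_iSup₂ (f := fun a _ => a + b) a ha
  -- Residuation `a + b ≤ c ↔ a ≤ c - b` fails only for `b = c = ⊥` and `b = c = ⊤`.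
  by_cases hb : b = ⊥
  · simp [hb]
  by_cases hc : c = ⊤
  · simp [hc]
  have le_sub_iff (a : EReal) : a ≤ c - b ↔ a + b ≤ c :=
    EReal.le_sub_iff_add_le (.inl hb) (.inr hc)
  exact (le_sub_iff _).1 (sSup_le fun a ha => (le_sub_iff a).2 (add_le a ha))

instance : IsAddQuantale EReal where
  add_sSup_distrib a s := by simpa only [add_comm a] using ereal_sSup_add s a
  sSup_add_distrib := ereal_sSup_add

open AddQuantale

section MulVec

variable {m n p : ℕ}

lemma mpMulVec_mono (A : Matrix (Fin m) (Fin n) EReal) : Monotone (mpMulVec A) :=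
  fun _ _ hxy i => iSup_mono fun k => add_le_add_right (hxy k) (A i k)

lemma mpMulVec_mSup (A B : Matrix (Fin m) (Fin n) EReal) (x : Fin n → EReal) :
    mpMulVec (mSup A B) x = mpMulVec A x ⊔ mpMulVec B x := by
  ext i
  simp only [mpMulVec, mSup, Pi.sup_apply, sup_add_distrib, iSup_sup_eq]

lemma mpMulVec_mpId (x : Fin n → EReal) : mpMulVec (mpId n) x = x := by
  ext i
  calc ⨆ k, (if i = k then 0 else ⊥) + x k = ⨆ k, ⨆ _ : i = k, x k := by
        simp only [ite_add, zero_add, EReal.bot_add, iSup_eq_if]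
    _ = x i := iSup_iSup_eq_right

lemma mpMulVec_mpMul (A : Matrix (Fin m) (Fin n) EReal) (B : Matrix (Fin n) (Fin p) EReal)
    (x : Fin p → EReal) : mpMulVec (mpMul A B) x = mpMulVec A (mpMulVec B x) := by
  ext i
  calc ⨆ j, (⨆ k, A i k + B k j) + x j = ⨆ j, ⨆ k, A i k + (B k j + x j) := by
        simp only [iSup_add_distrib, add_assoc]
    _ = ⨆ k, ⨆ j, A i k + (B k j + x j) := iSup_comm
    _ = ⨆ k, A i k + ⨆ j, B k j + x j := by simp only [add_iSup_distrib]

lemma mpMulVec_mpPow (A : Matrix (Fin n) (Fin n) EReal) (k : ℕ) (x : Fin n → EReal) :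
    mpMulVec (mpPow A k) x = (mpMulVec A)^[k] x := by
  induction k with
  | zero => exact mpMulVec_mpId x
  | succ k ih => rw [mpPow, mpMulVec_mpMul, ih, Function.iterate_succ_apply']

lemma mpMulVec_mpStar (A : Matrix (Fin n) (Fin n) EReal) (x : Fin n → EReal) :
    mpMulVec (mpStar A) x = ⨆ k, (mpMulVec A)^[k] x := by
  ext i
  calc ⨆ j, (⨆ k, mpPow A k i j) + x j = ⨆ j, ⨆ k, mpPow A k i j + x j := by
        simp only [iSup_add_distrib]
    _ = ⨆ k, mpMulVec (mpPow A k) x i := iSup_comm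
    _ = (⨆ k, (mpMulVec A)^[k] x) i := by simp only [mpMulVec_mpPow, iSup_apply]

end MulVec

/-- `A ⊗ x ≤ x ∧ B ⊗ x ≤ x ↔ x = (A ⊕ B)* ⊗ x`. -/
theorem two_ineq_iff_star {n : ℕ} (A B : Matrix (Fin n) (Fin n) EReal)
    (x : Fin n → EReal) :
    (mpMulVec A x ≤ x ∧ mpMulVec B x ≤ x) ↔ x = mpMulVec (mpStar (mSup A B)) x := by
  calc mpMulVec A x ≤ x ∧ mpMulVec B x ≤ x ↔ mpMulVec (mSup A B) x ≤ x := by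
        rw [mpMulVec_mSup, sup_le_iff]
    _ ↔ ⨆ k, (mpMulVec (mSup A B))^[k] x = x :=
        (iSup_iterate_eq_self_iff_map_le (mpMulVec_mono _)).symm
    _ ↔ x = mpMulVec (mpStar (mSup A B)) x := by rw [mpMulVec_mpStar, eq_comm]
end
end

section
/- (Slowest q-periodic trajectory.) Let 𝒜 and ℬ be n×n matrices over the extended reals ℝ̄, let μ be a real number, let q ≥ 1 be an integer, and let x(0) ∈ ℝ̄^n satisfy ℬ^{q'} ⊗' x(0) = qμ + x(0) (entrywise, min-plus powers). Then the trajectory x(k) = ℬ^{k'} ⊗' x(0) satisfies the lower-bound constraints 𝒜 ⊗ x(k-1) ≤ x(k) for all k ≥ 1 if and only if 𝒜 ⊗ (ℬ^{(i-1)'} ⊗' x(0)) ≤ ℬ^{i'} ⊗' x(0) for all i ∈ {1, …, q}. -/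
/-!
Write `x k = ℬ^{k'} ⊗' x0`. Because min-plus matrix-vector multiplication is an action of the
min-plus matrix product, `x k` is the `k`-th iterate of the single map `ℬ ⊗' ·`. Both `ℬ ⊗' ·` and
`𝒜 ⊗ ·` commute with adding a real scalar to every entry, so `x q = q * mu + x 0` propagates to
`x (k + q) = q * mu + x k` for every `k`, and the constraint at step `k + q` is the constraint at
step `k` with the same real number added on both sides.
-/

noncomputable section

section Iterate

variable {α : Type*} {f g s : α → α} {q : ℕ} {x : α}

theorem iterate_add_eq_of_commute (hfs : Function.Commute f s) (hx : f^[q] x = s x) (k : ℕ) :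
    f^[k + q] x = s (f^[k] x) := by
  rw [Function.iterate_add_apply, hx, hfs.iterate_left k]

theorem forall_iterate_iff_forall_lt (hfs : Function.Commute f s) (hq : 0 < q)
    (hx : f^[q] x = s x) {P : α → Prop} (hP : ∀ y, P y → P (s y)) :
    (∀ k, P (f^[k] x)) ↔ ∀ k < q, P (f^[k] x) := by
  refine ⟨fun h k _ => h k, fun h k => ?_⟩
  induction k using Nat.strong_induction_on with
  | _ k ih =>
    rcases lt_or_ge k q with hkq | hqk
    · exact h k hkq
    · obtain ⟨j, rfl⟩ := Nat.exists_eq_add_of_le' hqk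
      rw [iterate_add_eq_of_commute hfs hx]
      exact hP _ (ih j (Nat.lt_add_of_pos_right hq))

/-- For the matrix problem, `f = ℬ ⊗' ·`, `g = 𝒜 ⊗ ·`, and `s` adds `q * mu` to every entry. -/
theorem slowest_q_periodic_general [Preorder α] (hs : Monotone s) (hfs : Function.Commute f s)
    (hgs : Function.Commute g s) (hq : 1 ≤ q) (hx : f^[q] x = s x) :
    (∀ k : ℕ, 1 ≤ k → g (f^[k - 1] x) ≤ f^[k] x) ↔
      ∀ i : ℕ, 1 ≤ i → i ≤ q → g (f^[i - 1] x) ≤ f^[i] x := by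
  have constraint_shift (y : α) (hy : g y ≤ f y) : g (s y) ≤ f (s y) := by
    rw [hgs y, hfs y]
    exact hs hy
  have all_iff_first :=
    forall_iterate_iff_forall_lt hfs hq hx (P := fun y => g y ≤ f y) constraint_shift
  simp only [← Function.iterate_succ_apply'] at all_iff_first
  constructor
  · intro h i hi _
    exact h i hi
  · intro h k hk
    obtain ⟨j, rfl⟩ := Nat.exists_eq_add_of_le' hk
    exact all_iff_first.2 (fun i hi => h (i + 1) (Nat.le_add_left 1 i) hi) j

end Iterate

section MinPlusAddition

variable {ι : Sort*}

/-- The empty case is covered because the empty supremum `⊥` is absorbing for addition. -/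
theorem ereal_add_iSup (a : EReal) (f : ι → EReal) : a + ⨆ i, f i = ⨆ i, a + f i := by
  apply le_antisymm
  · refine EReal.add_le_of_forall_lt fun a' ha b hb => ?_
    obtain ⟨i, hi⟩ := lt_iSup_iff.1 hb
    exact (add_le_add ha.le hi.le).trans (le_iSup (fun i => a + f i) i)
  · exact iSup_le fun i => add_le_add le_rfl (le_iSup f i)

theorem ereal_neg_iSup (f : ι → EReal) : -(⨆ i, f i) = ⨅ i, -f i :=
  EReal.negOrderIso.map_iSup f

theorem ereal_neg_iInf (f : ι → EReal) : -(⨅ i, f i) = ⨆ i, -f i :=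
  EReal.negOrderIso.map_iInf f

theorem mnAdd_comm (a b : EReal) : mnAdd a b = mnAdd b a := by
  simp only [mnAdd, add_comm]

theorem mnAdd_assoc (a b c : EReal) : mnAdd (mnAdd a b) c = mnAdd a (mnAdd b c) := by
  simp only [mnAdd, neg_neg, add_assoc]

theorem mnAdd_left_comm (a b c : EReal) : mnAdd a (mnAdd b c) = mnAdd b (mnAdd a c) := by
  rw [← mnAdd_assoc, mnAdd_comm a b, mnAdd_assoc]

theorem zero_mnAdd (a : EReal) : mnAdd 0 a = a := by
  simp [mnAdd]

theorem top_mnAdd (a : EReal) : mnAdd ⊤ a = ⊤ := by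
  simp [mnAdd]

theorem coe_mnAdd (c : ℝ) (a : EReal) : mnAdd c a = c + a := by
  rw [mnAdd, EReal.neg_add (by simp) (by simp), sub_eq_add_neg, neg_neg, neg_neg]

theorem mnAdd_iInf (a : EReal) (f : ι → EReal) : mnAdd a (⨅ i, f i) = ⨅ i, mnAdd a (f i) := by
  simp only [mnAdd, ereal_neg_iInf, ereal_add_iSup, ereal_neg_iSup]

theorem iInf_mnAdd (f : ι → EReal) (a : EReal) : mnAdd (⨅ i, f i) a = ⨅ i, mnAdd (f i) a := by
  simp only [mnAdd_comm _ a, mnAdd_iInf]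

end MinPlusAddition

section MatrixVector

variable {m n p : ℕ}

theorem mpMulVec_vadd (A : Matrix (Fin m) (Fin n) EReal) (c : EReal) (x : Fin n → EReal) :
    mpMulVec A (c +ᵥ x) = c +ᵥ mpMulVec A x := by
  funext i
  simp only [mpMulVec, Pi.vadd_apply, vadd_eq_add, ereal_add_iSup, add_left_comm]

theorem mnMulVec_coe_vadd (A : Matrix (Fin m) (Fin n) EReal) (c : ℝ) (x : Fin n → EReal) :
    mnMulVec A ((c : EReal) +ᵥ x) = (c : EReal) +ᵥ mnMulVec A x := by
  funext i
  simp only [mnMulVec, Pi.vadd_apply, vadd_eq_add, ← coe_mnAdd, mnAdd_iInf,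
    mnAdd_left_comm (c : EReal)]

theorem mnMulVec_mnId (x : Fin n → EReal) : mnMulVec (mnId n) x = x := by
  funext i
  calc ⨅ k, mnAdd (if i = k then 0 else ⊤) (x k)
      = ⨅ k, ⨅ _ : i = k, x k := iInf_congr fun k => by
        split_ifs with h <;> simp [h, zero_mnAdd, top_mnAdd]
    _ = x i := iInf_iInf_eq_right

theorem mnMulVec_mnMul (A : Matrix (Fin m) (Fin n) EReal) (B : Matrix (Fin n) (Fin p) EReal)
    (x : Fin p → EReal) : mnMulVec (mnMul A B) x = mnMulVec A (mnMulVec B x) := by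
  funext i
  simp only [mnMulVec, mnMul, iInf_mnAdd, mnAdd_iInf, mnAdd_assoc]
  exact iInf_comm

theorem mnMulVec_mnPow (B : Matrix (Fin n) (Fin n) EReal) (k : ℕ) (x : Fin n → EReal) :
    mnMulVec (mnPow B k) x = (mnMulVec B)^[k] x := by
  induction k with
  | zero => exact mnMulVec_mnId x
  | succ k ih => rw [mnPow, mnMulVec_mnMul, ih, Function.iterate_succ_apply']

end MatrixVector

/-- slowest q-periodic trajectory. -/
theorem slowest_q_periodic {n : ℕ} (𝒜 ℬ : Matrix (Fin n) (Fin n) EReal)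
    (mu : ℝ) (q : ℕ) (hq : 1 ≤ q) (x0 : Fin n → EReal)
    (heig : mnMulVec (mnPow ℬ q) x0 = fun i => (((q : ℝ) * mu : ℝ) : EReal) + x0 i) :
    (∀ k : ℕ, 1 ≤ k →
        mpMulVec 𝒜 (mnMulVec (mnPow ℬ (k - 1)) x0) ≤ mnMulVec (mnPow ℬ k) x0) ↔
      (∀ i : ℕ, 1 ≤ i → i ≤ q →
        mpMulVec 𝒜 (mnMulVec (mnPow ℬ (i - 1)) x0) ≤ mnMulVec (mnPow ℬ i) x0) := by
  simp only [mnMulVec_mnPow] at heig ⊢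
  exact slowest_q_periodic_general (s := ((((q : ℝ) * mu : ℝ) : EReal) +ᵥ ·))
    (fun _ _ hxy i => add_le_add le_rfl (hxy i)) (mnMulVec_coe_vadd ℬ _) (mpMulVec_vadd 𝒜 _) hq heig
end
end
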